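/- Let f(x₁, x₂) = x₁² − x₁ + 1 − x₂², a signomial on ℝ²_{>0}. Then the vector (0, −1) lies in the negative normal cone N_f^- but does not lie in the real tropicalization Trop(S(f)), where S(f) = f^{-1}(ℝ_{<0}). In particular, Trop(S(f)) ⊊ N_f^-. -/

import Mathlib

/-- A signomial on the positive orthant `ℝⁿ_{>0}`: a function
`x ↦ ∑_{μ ∈ supp} coeff μ * x ^ μ` with finite support and nonzero coefficients. -/
structure Signomial (n : ℕ) where
  supp : Finset (Fin n → ℝ)
  coeff : (Fin n → ℝ) → ℝ
  coeff_ne_zero : ∀ μ ∈ supp, coeff μ ≠ 0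
  coeff_eq_zero : ∀ μ ∉ supp, coeff μ = 0

namespace Signomial

variable {n : ℕ}

/-- The monomial `x^μ = ∏ i, x i ^ μ i` (real exponents). -/
noncomputable def mono (x μ : Fin n → ℝ) : ℝ := ∏ i, x i ^ μ i

/-- Evaluation of a signomial. -/
noncomputable def eval (f : Signomial n) (x : Fin n → ℝ) : ℝ :=
  ∑ μ ∈ f.supp, f.coeff μ * mono x μ

open Classical in
/-- Evaluation of the restriction `f_{|S}` of `f` to a set `S ⊆ ℝⁿ`. -/
noncomputable def evalOn (f : Signomial n) (S : Set (Fin n → ℝ)) (x : Fin n → ℝ) : ℝ :=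
  ∑ μ ∈ f.supp, if μ ∈ S then f.coeff μ * mono x μ else 0

/-- The Newton polytope `N(f) = conv(σ(f))`. -/
def newton (f : Signomial n) : Set (Fin n → ℝ) :=
  convexHull ℝ (f.supp : Set (Fin n → ℝ))

/-- Euclidean scalar product on `Fin n → ℝ`. -/
noncomputable def dot (v μ : Fin n → ℝ) : ℝ := ∑ i, v i * μ i

/-- The face `N(f)_v` of the Newton polytope cut out by `v`. -/
def faceAt (f : Signomial n) (v : Fin n → ℝ) : Set (Fin n → ℝ) :=
  {μ ∈ f.newton | ∀ ν ∈ f.newton, dot v ν ≤ dot v μ}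

/-- `F` is a (nonempty, exposed) face of the Newton polytope of `f`. -/
def IsFace (f : Signomial n) (F : Set (Fin n → ℝ)) : Prop :=
  F.Nonempty ∧ ∃ v, F = f.faceAt v

/-- The (outer) normal cone of a face `F` of `N(f)`. -/
def normalCone (f : Signomial n) (F : Set (Fin n → ℝ)) : Set (Fin n → ℝ) :=
  {v | F ⊆ f.faceAt v}

/-- The negative normal cone `N_f^- = {v | N(f)_v ∩ σ₋(f) ≠ ∅}`. -/
def negCone (f : Signomial n) : Set (Fin n → ℝ) :=
  {v | ∃ μ ∈ f.supp, f.coeff μ < 0 ∧ μ ∈ f.faceAt v}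

/-- The positive orthant `ℝⁿ_{>0}`. -/
def posOrth (n : ℕ) : Set (Fin n → ℝ) := {x | ∀ i, 0 < x i}

/-- `S(f) = f⁻¹(ℝ_{<0})` (inside the positive orthant). -/
def negSet₁ (f : Signomial n) : Set (Fin n → ℝ) :=
  {x ∈ posOrth n | f.eval x < 0}

/-- `S(f₁, …, f_k) = ⋂ᵢ fᵢ⁻¹(ℝ_{<0})` (inside the positive orthant). -/
def negSet {k : ℕ} (f : Fin k → Signomial n) : Set (Fin n → ℝ) :=
  {x ∈ posOrth n | ∀ i, (f i).eval x < 0}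

/-- The actual negative normal cone `Σ(f)` of a single signomial. -/
def actualNegCone₁ (f : Signomial n) : Set (Fin n → ℝ) :=
  {v | ∃ x ∈ posOrth n, f.evalOn (f.faceAt v) x < 0}

/-- The actual negative normal cone `Σ(f₁, …, f_k)`. -/
def actualNegCone {k : ℕ} (f : Fin k → Signomial n) : Set (Fin n → ℝ) :=
  {v | ∃ x ∈ posOrth n, ∀ i, (f i).evalOn ((f i).faceAt v) x < 0}

/-- The real tropicalization (logarithmic limit set) of `S ⊆ ℝⁿ_{>0}`:
`w ∈ Trop(S)` iff there are sequences `x(m) ∈ S`, `t(m) ∈ (1,∞)` with `t(m) → ∞` and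
`Log_{t(m)}(x(m)) → w`. -/
def trop (S : Set (Fin n → ℝ)) : Set (Fin n → ℝ) :=
  {w | ∃ (x : ℕ → Fin n → ℝ) (t : ℕ → ℝ),
    (∀ m, x m ∈ S) ∧ (∀ m, 1 < t m) ∧
    Filter.Tendsto t Filter.atTop Filter.atTop ∧
    Filter.Tendsto (fun m i => Real.log (x m i) / Real.log (t m))
      Filter.atTop (nhds w)}

open Classical in
/-- The support of the restriction `f_{|F}`, i.e. `σ(f) ∩ F`. -/
noncomputable def restSupp (f : Signomial n) (F : Set (Fin n → ℝ)) : Finset (Fin n → ℝ) :=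
  f.supp.filter (fun μ => μ ∈ F)

/-- Evaluation of the signomial with coefficient vector `c ∈ ℝ^A`. -/
noncomputable def evalVec (A : Finset (Fin n → ℝ)) (c : A → ℝ) (x : Fin n → ℝ) : ℝ :=
  ∑ μ : A, c μ * mono x (μ : Fin n → ℝ)

/-- The nonnegativity cone `P⁺_A ⊆ ℝ^A`. -/
def nonnegConeSet (A : Finset (Fin n → ℝ)) : Set (A → ℝ) :=
  {c | ∀ x ∈ posOrth n, 0 ≤ evalVec A c x}

/-- The coefficient vector of `f` viewed in `ℝ^A`. -/
def coeffVec (f : Signomial n) (A : Finset (Fin n → ℝ)) : A → ℝ :=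
  fun μ => f.coeff μ

/-- The non-boundary condition (NB): for every face `F` of `N(f)`, if `f_{|F}` is
nonnegative on the positive orthant then it lies in the interior of the nonnegativity
cone `P⁺_{σ(f) ∩ F}`. -/
def NBcond (f : Signomial n) : Prop :=
  ∀ F : Set (Fin n → ℝ), f.IsFace F →
    coeffVec f (f.restSupp F) ∈ nonnegConeSet (f.restSupp F) →
    coeffVec f (f.restSupp F) ∈ interior (nonnegConeSet (f.restSupp F))

end Signomial

/-!
If `f` is negative at `x`, then every monomial of `f` is at `x` at most a constant multiple of the
largest monomial with a negative coefficient. Taking logarithms to a base that tends to infinity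
kills the constants, so a direction in `Trop(S(f))` attains its maximum over `σ(f)` at a negative
exponent vector. On the other hand, the face of `N(f)` in direction `(0, -1)` carries the negative
term `-x₁`, but the restriction of `f` to it is `x₁² - x₁ + 1 ≥ 3/4`; hence `x₂` is bounded away
from zero on `S(f)`, and `Trop(S(f))` stays in the half-plane `w₂ ≥ 0`.
-/

namespace Signomial

open Filter Topology

variable {n : ℕ} {f : Signomial n} {S : Set (Fin n → ℝ)} {v w x μ : Fin n → ℝ}

lemma isLinearMap_dot (v : Fin n → ℝ) : IsLinearMap ℝ (dot v) :=
  ⟨dotProduct_add v, fun c ↦ dotProduct_smul c v⟩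

lemma smul_dot (c : ℝ) (v μ : Fin n → ℝ) : dot (c • v) μ = c * dot v μ :=
  smul_dotProduct c v μ

lemma continuous_dot_left (μ : Fin n → ℝ) : Continuous fun v ↦ dot v μ := by
  unfold dot
  fun_prop

lemma mono_pos (hx : x ∈ posOrth n) (μ : Fin n → ℝ) : 0 < mono x μ :=
  Finset.prod_pos fun i _ ↦ Real.rpow_pos_of_pos (hx i) _

lemma log_mono (hx : x ∈ posOrth n) (μ : Fin n → ℝ) :
    Real.log (mono x μ) = dot (fun i ↦ Real.log (x i)) μ := by
  rw [mono, dot, Real.log_prod fun i _ ↦ (Real.rpow_pos_of_pos (hx i) _).ne']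
  exact Finset.sum_congr rfl fun i _ ↦ by rw [Real.log_rpow (hx i), mul_comm]

lemma mem_faceAt_of_forall_supp_le (hμ : μ ∈ f.supp)
    (hmax : ∀ ν ∈ f.supp, dot v ν ≤ dot v μ) : μ ∈ f.faceAt v :=
  ⟨subset_convexHull ℝ _ hμ,
    fun _ hν ↦ convexHull_min hmax (convex_halfSpace_le (isLinearMap_dot v) _) hν⟩

/-- The set `σ₋(f)` of negative exponent vectors of `f`. -/
noncomputable def negSupp (f : Signomial n) : Finset (Fin n → ℝ) :=
  {μ ∈ f.supp | f.coeff μ < 0}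

lemma mem_negSupp : μ ∈ f.negSupp ↔ μ ∈ f.supp ∧ f.coeff μ < 0 :=
  Finset.mem_filter

lemma mem_negCone_of_forall_supp_le (hμ : μ ∈ f.negSupp)
    (hmax : ∀ ν ∈ f.supp, dot v ν ≤ dot v μ) : v ∈ negCone f := by
  obtain ⟨hμsupp, hμneg⟩ := mem_negSupp.1 hμ
  exact ⟨μ, hμsupp, hμneg, mem_faceAt_of_forall_supp_le hμsupp hmax⟩

lemma negSupp_nonempty_of_mem_negSet₁ (hx : x ∈ negSet₁ f) : f.negSupp.Nonempty := by
  obtain ⟨hpos, hneg⟩ := hx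
  contrapose! hneg
  refine Finset.sum_nonneg fun μ hμ ↦ mul_nonneg (not_lt.1 fun hc ↦ ?_) (mono_pos hpos μ).le
  simpa [hneg] using mem_negSupp.2 ⟨hμ, hc⟩

lemma neg_abs_coeff_mul_le_coeff_mul_mono {M : ℝ} (hpos : x ∈ posOrth n) (hM : 0 ≤ M)
    (hmax : ∀ ν ∈ f.negSupp, mono x ν ≤ M) (hμ : μ ∈ f.supp) :
    -(|f.coeff μ| * M) ≤ f.coeff μ * mono x μ := by
  rcases lt_or_ge (f.coeff μ) 0 with hc | hc
  · rw [abs_of_neg hc, neg_mul, neg_neg]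
    exact mul_le_mul_of_nonpos_left (hmax μ (mem_negSupp.2 ⟨hμ, hc⟩)) hc.le
  · have := mul_nonneg hc (mono_pos hpos μ).le
    have := mul_nonneg (abs_nonneg (f.coeff μ)) hM
    linarith

lemma abs_coeff_mul_mono_le {M : ℝ} (hx : x ∈ negSet₁ f) (hM : 0 ≤ M)
    (hmax : ∀ ν ∈ f.negSupp, mono x ν ≤ M) (hμ : μ ∈ f.supp) :
    |f.coeff μ| * mono x μ ≤ (∑ ν ∈ f.supp, |f.coeff ν|) * M := by
  classical
  obtain ⟨hpos, hneg⟩ := hx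
  rcases lt_or_ge (f.coeff μ) 0 with hc | hc
  · have hle : |f.coeff μ| ≤ ∑ ν ∈ f.supp, |f.coeff ν| :=
      Finset.single_le_sum (f := fun ν ↦ |f.coeff ν|) (fun _ _ ↦ abs_nonneg _) hμ
    calc |f.coeff μ| * mono x μ ≤ |f.coeff μ| * M := by
          gcongr
          exact hmax μ (mem_negSupp.2 ⟨hμ, hc⟩)
      _ ≤ (∑ ν ∈ f.supp, |f.coeff ν|) * M := by gcongr
  · have hrest : -((∑ ν ∈ f.supp.erase μ, |f.coeff ν|) * M)
        ≤ ∑ ν ∈ f.supp.erase μ, f.coeff ν * mono x ν := by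
      rw [Finset.sum_mul, ← Finset.sum_neg_distrib]
      exact Finset.sum_le_sum fun ν hν ↦
        neg_abs_coeff_mul_le_coeff_mul_mono hpos hM hmax (Finset.mem_of_mem_erase hν)
    rw [eval, ← Finset.add_sum_erase _ _ hμ] at hneg
    rw [← Finset.add_sum_erase _ _ hμ, add_mul, abs_of_nonneg hc]
    have := mul_nonneg hc hM
    linarith

lemma log_abs_coeff_sub_log_sum_le (hx : x ∈ negSet₁ f) (hμ : μ ∈ f.supp) :
    Real.log |f.coeff μ| - Real.log (∑ ν ∈ f.supp, |f.coeff ν|) ≤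
      f.negSupp.sup' (negSupp_nonempty_of_mem_negSet₁ hx) (dot fun i ↦ Real.log (x i))
        - dot (fun i ↦ Real.log (x i)) μ := by
  obtain ⟨ν, hν, hνmax⟩ :=
    f.negSupp.exists_max_image (mono x) (negSupp_nonempty_of_mem_negSet₁ hx)
  have hpos := hx.1
  have hc : 0 < |f.coeff μ| := abs_pos.2 (f.coeff_ne_zero μ hμ)
  have hsum : 0 < ∑ ν ∈ f.supp, |f.coeff ν| := hc.trans_le <|
    Finset.single_le_sum (f := fun ν ↦ |f.coeff ν|) (fun _ _ ↦ abs_nonneg _) hμ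
  have hlog := Real.log_le_log (mul_pos hc (mono_pos hpos μ))
    (abs_coeff_mul_mono_le hx (mono_pos hpos ν).le hνmax hμ)
  rw [Real.log_mul hc.ne' (mono_pos hpos μ).ne', Real.log_mul hsum.ne' (mono_pos hpos ν).ne',
    log_mono hpos, log_mono hpos] at hlog
  have hsup := Finset.le_sup' (dot fun i ↦ Real.log (x i)) hν
  linarith

lemma nonempty_of_mem_trop (hw : w ∈ trop S) : S.Nonempty := by
  obtain ⟨x, t, hx, -⟩ := hw
  exact ⟨x 0, hx 0⟩

lemma nonneg_of_mem_trop {g : (Fin n → ℝ) → ℝ} {C : ℝ} (hg : Continuous g)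
    (hsmul : ∀ c > 0, ∀ u, g (c • u) = c * g u)
    (hC : ∀ x ∈ S, C ≤ g fun i ↦ Real.log (x i)) (hw : w ∈ trop S) : 0 ≤ g w := by
  obtain ⟨x, t, hx, ht, ht_top, hlim⟩ := hw
  have hC_lim : Tendsto (fun m ↦ C / Real.log (t m)) atTop (𝓝 0) :=
    (Real.tendsto_log_atTop.comp ht_top).const_div_atTop C
  refine le_of_tendsto_of_tendsto' hC_lim ((hg.tendsto w).comp hlim) fun m ↦ ?_
  have hlog : 0 < Real.log (t m) := Real.log_pos (ht m)
  calc C / Real.log (t m) ≤ g (fun i ↦ Real.log (x m i)) / Real.log (t m) := by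
        gcongr
        exact hC _ (hx m)
    _ = g ((Real.log (t m))⁻¹ • fun i ↦ Real.log (x m i)) := by
        rw [hsmul _ (inv_pos.2 hlog), div_eq_inv_mul]
    _ = g fun i ↦ Real.log (x m i) / Real.log (t m) := by
        congr 1
        ext i
        simp only [Pi.smul_apply, smul_eq_mul, div_eq_inv_mul]

lemma apply_nonneg_of_mem_trop {i : Fin n} {ε : ℝ} (hε : 0 < ε) (hS : ∀ x ∈ S, ε ≤ x i)
    (hw : w ∈ trop S) : 0 ≤ w i :=
  nonneg_of_mem_trop (g := fun u ↦ u i) (continuous_apply i) (fun _ _ _ ↦ rfl)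
    (fun x hx ↦ Real.log_le_log hε (hS x hx)) hw

lemma sup'_smul_dot {s : Finset (Fin n → ℝ)} (hs : s.Nonempty) {c : ℝ} (hc : 0 ≤ c)
    (v : Fin n → ℝ) : s.sup' hs (dot (c • v)) = c * s.sup' hs (dot v) := by
  simp_rw [Finset.mul₀_sup' hc (dot v) s hs, ← smul_dot]

theorem trop_negSet₁_subset_negCone (f : Signomial n) : trop (negSet₁ f) ⊆ negCone f := by
  intro w hw
  obtain ⟨x, hx⟩ := nonempty_of_mem_trop hw
  have hne := negSupp_nonempty_of_mem_negSet₁ hx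
  have hle : ∀ μ ∈ f.supp, dot w μ ≤ f.negSupp.sup' hne (dot w) := by
    intro μ hμ
    refine sub_nonneg.1 <| nonneg_of_mem_trop
      (g := fun u ↦ f.negSupp.sup' hne (dot u) - dot u μ) ?_ ?_
      (fun x hx ↦ log_abs_coeff_sub_log_sum_le hx hμ) hw
    · exact (Continuous.finset_sup'_apply hne fun ν _ ↦ continuous_dot_left ν).sub
        (continuous_dot_left μ)
    · intro c hc u
      rw [sup'_smul_dot hne hc.le, smul_dot, mul_sub]
  obtain ⟨ν, hν, hνmax⟩ := Finset.exists_mem_eq_sup' hne (dot w)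
  exact mem_negCone_of_forall_supp_le hν (hνmax ▸ hle)

lemma eval_eq_quadratic {f : Signomial 2}
    (hsupp : f.supp = {![2, 0], ![1, 0], ![0, 0], ![0, 2]})
    (h1 : f.coeff ![2, 0] = 1) (h2 : f.coeff ![1, 0] = -1)
    (h3 : f.coeff ![0, 0] = 1) (h4 : f.coeff ![0, 2] = -1) (x : Fin 2 → ℝ) :
    f.eval x = x 0 ^ 2 - x 0 + 1 - x 1 ^ 2 := by
  have heval : f.eval x =
      mono x ![2, 0] + (-mono x ![1, 0] + (mono x ![0, 0] + -mono x ![0, 2])) := by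
    simp [eval, hsupp, h1, h2, h3, h4]
  have hmono (a b : ℝ) : mono x ![a, b] = x 0 ^ a * x 1 ^ b := Fin.prod_univ_two _
  simp only [heval, hmono, Real.rpow_ofNat, Real.rpow_one, Real.rpow_zero]
  ring

lemma half_le_of_sq_sub_self_add_one_lt_sq {a b : ℝ} (hb : 0 ≤ b)
    (h : a ^ 2 - a + 1 < b ^ 2) : 1 / 2 ≤ b := by
  nlinarith [sq_nonneg (a - 1 / 2)]

end Signomial

open Signomial in
/-- For `f = x₁² − x₁ + 1 − x₂²`, the vector `(0, −1)` lies in the negative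
normal cone `N_f^-` but not in `Trop(S(f))`; in particular `Trop(S(f)) ⊊ N_f^-`. -/
theorem negCone_strictly_larger_than_trop (f : Signomial 2)
    (hsupp : f.supp = {![2, 0], ![1, 0], ![0, 0], ![0, 2]})
    (h1 : f.coeff ![2, 0] = 1) (h2 : f.coeff ![1, 0] = -1)
    (h3 : f.coeff ![0, 0] = 1) (h4 : f.coeff ![0, 2] = -1) :
    (![0, -1] : Fin 2 → ℝ) ∈ negCone f ∧
    (![0, -1] : Fin 2 → ℝ) ∉ trop (negSet₁ f) ∧
    trop (negSet₁ f) ⊂ negCone f := by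
  have hmem : (![0, -1] : Fin 2 → ℝ) ∈ negCone f := by
    refine mem_negCone_of_forall_supp_le (μ := ![1, 0])
      (mem_negSupp.2 ⟨by simp [hsupp], by simp [h2]⟩) ?_
    simp [hsupp, dot]
  have hbound : ∀ x ∈ negSet₁ f, 1 / 2 ≤ x 1 := fun x ⟨hpos, hneg⟩ ↦
    half_le_of_sq_sub_self_add_one_lt_sq (hpos 1).le
      (sub_neg.1 (eval_eq_quadratic hsupp h1 h2 h3 h4 x ▸ hneg))
  have hnotMem : (![0, -1] : Fin 2 → ℝ) ∉ trop (negSet₁ f) := fun hw ↦ by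
    have hnonneg := apply_nonneg_of_mem_trop one_half_pos hbound hw
    norm_num at hnonneg
  exact ⟨hmem, hnotMem, trop_negSet₁_subset_negCone f, fun hsub ↦ hnotMem (hsub hmem)⟩
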